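/- Let X be a bounded geometry metric space that does not admit a coarse embedding into the real Hilbert space ℓ²(ℕ). Then there exist ε > 0 and R > 0 such that for all S > 0 there exists a probability measure μ on X such that every subset E ⊆ supp(μ) with diam(E) ≤ S satisfies μ(∂_R E) ≥ ε · μ(E). -/

import Mathlib

/-- `N_R(E)`, the `R`-neighbourhood of `E`. -/
def nbhd {X : Type*} [MetricSpace X] (R : ℝ) (E : Set X) : Set X :=
  {y | ∃ e ∈ E, dist y e ≤ R}

/-- `∂_R E = N_R(E) \ E`. -/
def bdry {X : Type*} [MetricSpace X] (R : ℝ) (E : Set X) : Set X :=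
  nbhd R E \ E

/-- Bounded geometry. -/
def BoundedGeometry (X : Type*) [MetricSpace X] : Prop :=
  ∀ R : ℝ, 0 < R → ∃ N : ℕ, ∀ x : X,
    {y | dist x y ≤ R}.Finite ∧ {y | dist x y ≤ R}.ncard ≤ N

/-- A probability measure on `X`, as a function. -/
def IsProbFn {X : Type*} (μ : X → ℝ) : Prop :=
  (∀ x, 0 ≤ μ x) ∧ Summable μ ∧ ∑' x, μ x = 1

/-- `μ(E)`. -/
noncomputable def measOf {X : Type*} (μ : X → ℝ) (E : Set X) : ℝ := ∑' x : E, μ x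

/-- Uniform local amenability. -/
def ULA (X : Type*) [MetricSpace X] : Prop :=
  ∀ R : ℝ, 0 < R → ∀ ε : ℝ, 0 < ε → ∃ S : ℝ, 0 < S ∧
    ∀ F : Set X, F.Finite → ∃ E : Set X, E.Finite ∧
      EMetric.diam E ≤ ENNReal.ofReal S ∧
      ((bdry R E ∩ F).ncard : ℝ) < ε * ((E ∩ F).ncard : ℝ)

/-- Measured uniform local amenability. -/
def ULAmu (X : Type*) [MetricSpace X] : Prop :=
  ∀ R : ℝ, 0 < R → ∀ ε : ℝ, 0 < ε → ∃ S : ℝ, 0 < S ∧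
    ∀ μ : X → ℝ, IsProbFn μ → ∃ E : Set X, E.Finite ∧
      EMetric.diam E ≤ ENNReal.ofReal S ∧
      measOf μ (bdry R E) < ε * measOf μ E

/-- Coarse embedding. -/
def CoarseEmbedding {X Y : Type*} [MetricSpace X] [MetricSpace Y] (f : X → Y) : Prop :=
  ∃ ρm ρp : ℝ → ℝ, Monotone ρm ∧ Monotone ρp ∧
    Filter.Tendsto ρm Filter.atTop Filter.atTop ∧
    ∀ x₁ x₂ : X, ρm (dist x₁ x₂) ≤ dist (f x₁) (f x₂) ∧
      dist (f x₁) (f x₂) ≤ ρp (dist x₁ x₂)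

/-!
Suppose that for all `R`, `ε` there is an `S` such that every probability measure `μ` has a set `E`
of diameter at most `S` with `μ(∂_R E) < ε μ(E)`. Repeatedly removing such a set together with its
boundary partitions any finite weighted set, up to a set of relative weight at most `ε`, into
pieces of diameter at most `S` that are pairwise more than `R` apart. So for every finite weighted
family of pairs at distance at most `R` there is a partition into pieces of diameter at most `S`
that separates pairs of relative weight at most `2ε`. Indicator kernels of partitions are positive
semidefinite, and the normalized positive semidefinite kernels of width `S` form a compact convex
set. Hence by the minimax theorem and compactness a single kernel is at least `1 - 2ε` on all
pairs at distance at most `R`. The feature maps of such kernels, for `R → ∞` and `ε → 0`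
summably fast, add up to a coarse embedding into a Hilbert space; separability of `X` reduces this
space to `ℓ²(ℕ)`.
-/

open Filter TopologicalSpace

section Hilbert

variable {𝕜 H : Type*} [RCLike 𝕜] [NormedAddCommGroup H] [InnerProductSpace 𝕜 H]

theorem countable_of_orthonormal [SeparableSpace H] {ι : Type*} {v : ι → H}
    (hv : Orthonormal 𝕜 v) : Countable ι := by
  have hdist : Pairwise fun i j => 1 ≤ dist (v i) (v j) := by
    intro i j hij
    have hsq : dist (v i) (v j) ^ 2 = 2 := by
      rw [dist_eq_norm, @norm_sub_sq 𝕜, hv.2 hij, hv.1 i, hv.1 j, map_zero]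
      norm_num
    nlinarith [dist_nonneg (x := v i) (y := v j)]
  refine Pairwise.countable_of_isOpen_disjoint (s := fun i => Metric.ball (v i) (1 / 2))
    (fun i j hij => Metric.ball_disjoint_ball ?_) (fun _ => Metric.isOpen_ball)
    fun i => Metric.nonempty_ball.2 one_half_pos
  linarith [hdist hij]

variable (𝕜 H) in
theorem exists_linearIsometry_lp_nat [CompleteSpace H] [SeparableSpace H] :
    Nonempty (H →ₗᵢ[𝕜] lp (fun _ : ℕ => 𝕜) 2) := by
  obtain ⟨w, b, -⟩ := exists_hilbertBasis 𝕜 H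
  have : Countable w := countable_of_orthonormal b.orthonormal
  obtain ⟨e, he⟩ := exists_injective_nat w
  have hon := (default : HilbertBasis ℕ 𝕜 (lp (fun _ : ℕ => 𝕜) 2)).orthonormal.comp e he
  exact ⟨hon.orthogonalFamily.linearIsometry.comp b.repr.toLinearIsometry⟩

variable (𝕜) in
theorem exists_lp_nat_dist_eq_of_isSeparable_range [CompleteSpace H] {X : Type*} {f : X → H}
    (hf : IsSeparable (Set.range f)) :
    ∃ g : X → lp (fun _ : ℕ => 𝕜) 2, ∀ x y, dist (g x) (g y) = dist (f x) (f y) := by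
  let V : Submodule 𝕜 H := (Submodule.span 𝕜 (Set.range f)).topologicalClosure
  have : SeparableSpace V := IsSeparable.separableSpace (hf.span (R := 𝕜)).closure
  have : CompleteSpace V := (Submodule.isClosed_topologicalClosure _).completeSpace_coe
  have hV (x : X) : f x ∈ V := subset_closure (Submodule.subset_span ⟨x, rfl⟩)
  obtain ⟨g⟩ := exists_linearIsometry_lp_nat 𝕜 V
  exact ⟨fun x => g ⟨f x, hV x⟩, fun x y => g.dist_map _ _⟩

end Hilbert

theorem exists_inner_eq_of_posSemidef.{u} {X : Type u} {k : Matrix X X ℝ} (hk : k.PosSemidef) :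
    ∃ (H : Type u) (_ : NormedAddCommGroup H) (_ : InnerProductSpace ℝ H) (_ : CompleteSpace H)
      (φ : X → H), ∀ x y, inner ℝ (φ x) (φ y) = k x y := by
  -- `RKHS.OfKernel` takes operator-valued kernels, so `k` acts by scalars on `ℝ`.
  let K : Matrix X X (ℝ →L[ℝ] ℝ) := k.map (· • (1 : ℝ →L[ℝ] ℝ))
  have hK : K.PosSemidef := by
    have hKH : K.IsHermitian := hk.1.map _ fun a => by simp
    have hiff := (RKHS.posSemidef_tfae (K := K)).out 0 2
    refine hiff.2 ⟨hKH, fun v => (hk.2 v).trans_eq ?_⟩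
    simp only [K, Finsupp.sum, RCLike.re_to_real]
    refine Finset.sum_congr rfl fun x _ => Finset.sum_congr rfl fun y _ => ?_
    simp only [star_trivial, ← hk.1.apply x y, Matrix.map_apply, smul_apply, one_apply_eq_self,
      smul_eq_mul, RCLike.inner_apply, Real.ringHom_apply]
    ring
  have : Fact K.PosSemidef := ⟨hK⟩
  refine ⟨RKHS.OfKernel K, inferInstance, inferInstance, inferInstance,
    fun x => RKHS.kerFun (RKHS.OfKernel K) x 1, fun x y => ?_⟩
  rw [← RKHS.kernel_inner, RKHS.OfKernel.kernel_ofKernel]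
  simpa [K] using hk.1.apply x y

theorem exists_lp_hasSum_dist_sq {X : Type*} {E : ℕ → Type*} [∀ n, NormedAddCommGroup (E n)]
    (φ : ∀ n, X → E n) (hφ : ∀ x y, Summable fun n => dist (φ n x) (φ n y) ^ 2) :
    ∃ F : X → lp E 2, ∀ x y, HasSum (fun n => dist (φ n x) (φ n y) ^ 2) (dist (F x) (F y) ^ 2) := by
  obtain _ | ⟨⟨x₀⟩⟩ := isEmpty_or_nonempty X
  · exact ⟨isEmptyElim, isEmptyElim⟩
  have hmem (x : X) : Memℓp (fun n => φ n x - φ n x₀) 2 :=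
    memℓp_gen (by simpa [dist_eq_norm] using hφ x x₀)
  let F (x : X) : lp E 2 := ⟨_, hmem x⟩
  refine ⟨F, fun x y => ?_⟩
  have hcoord (n : ℕ) : ‖(F x - F y) n‖ = dist (φ n x) (φ n y) := by
    rw [dist_eq_norm, ← sub_sub_sub_cancel_right (φ n x) (φ n y) (φ n x₀)]
    rfl
  have hsum := lp.hasSum_norm (p := 2) (by simp) (F x - F y)
  simpa only [hcoord, ← dist_eq_norm, ENNReal.toReal_ofNat, Real.rpow_ofNat] using hsum

section CoarseEmbedding

theorem exists_countable_range_dist_le {X : Type*} [PseudoMetricSpace X] [SeparableSpace X]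
    {ε : ℝ} (hε : 0 < ε) :
    ∃ r : X → X, (Set.range r).Countable ∧ ∀ x, dist x (r x) ≤ ε := by
  obtain ⟨D, hDc, hD⟩ := exists_countable_dense X
  choose r hrD hr using fun x => hD.exists_dist_lt x hε
  exact ⟨r, hDc.mono (Set.range_subset_iff.2 hrD), fun x => (hr x).le⟩

variable {X : Type*} [MetricSpace X]

theorem CoarseEmbedding.comp_of_dist_le {Y : Type*} [MetricSpace Y] {f : X → Y}
    (hf : CoarseEmbedding f) {r : X → X} {C : ℝ} (hr : ∀ x, dist x (r x) ≤ C) :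
    CoarseEmbedding (f ∘ r) := by
  obtain ⟨ρm, ρp, hm, hp, htop, hf⟩ := hf
  refine ⟨fun t => ρm (t - 2 * C), fun t => ρp (t + 2 * C),
    hm.comp fun _ _ h => by gcongr, hp.comp fun _ _ h => by gcongr,
    htop.comp (tendsto_atTop_add_const_right _ _ tendsto_id), fun x y => ⟨?_, ?_⟩⟩
  · refine (hm ?_).trans (hf (r x) (r y)).1
    linarith [dist_triangle4_right x y (r x) (r y), hr x, hr y]
  · refine (hf (r x) (r y)).2.trans (hp ?_)
    linarith [dist_triangle4 (r x) x y (r y), dist_comm (r x) x, hr x, hr y]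

theorem CoarseEmbedding.exists_lp_nat [SeparableSpace X] {H : Type*} [NormedAddCommGroup H]
    [InnerProductSpace ℝ H] [CompleteSpace H] {f : X → H} (hf : CoarseEmbedding f) :
    ∃ g : X → lp (fun _ : ℕ => ℝ) 2, CoarseEmbedding g := by
  obtain ⟨r, hrc, hr⟩ := exists_countable_range_dist_le (X := X) one_pos
  have hsep : IsSeparable (Set.range (f ∘ r)) := by
    rw [Set.range_comp]
    exact (hrc.image f).isSeparable
  obtain ⟨g, hg⟩ := exists_lp_nat_dist_eq_of_isSeparable_range ℝ hsep
  refine ⟨g, ?_⟩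
  simpa only [CoarseEmbedding, hg] using hf.comp_of_dist_le hr

/-- The number of indices `n < ⌊t⌋₊` with `S n < t`, which serves as a lower control function.
The truncation at `⌊t⌋₊` keeps the count finite when `S` is bounded. -/
noncomputable def thresholdCount (S : ℕ → ℝ) (t : ℝ) : ℕ :=
  ((Finset.range ⌊t⌋₊).filter fun n => S n < t).card

theorem thresholdCount_mono (S : ℕ → ℝ) : Monotone (thresholdCount S) := by
  intro s t hst
  refine Finset.card_le_card fun n => ?_
  simp only [Finset.mem_filter, Finset.mem_range]
  exact fun ⟨hn, hS⟩ => ⟨hn.trans_le (Nat.floor_le_floor hst), hS.trans_le hst⟩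

theorem tendsto_thresholdCount_atTop (S : ℕ → ℝ) : Tendsto (thresholdCount S) atTop atTop := by
  refine tendsto_atTop.2 fun N => ?_
  have hS : ∀ᶠ t in atTop, ∀ n ∈ Finset.range N, S n < t :=
    (Filter.eventually_all_finset _).2 fun n _ => eventually_gt_atTop (S n)
  filter_upwards [hS, eventually_ge_atTop (N : ℝ)] with t hSt hNt
  rw [← Finset.card_range N]
  refine Finset.card_le_card fun n hn => Finset.mem_filter.2 ⟨?_, hSt n hn⟩
  exact Finset.range_mono (Nat.le_floor hNt) hn

theorem thresholdCount_le_tsum {S : ℕ → ℝ} {t : ℝ} {a : ℕ → ℝ} (ha : Summable a) (ha₀ : 0 ≤ a)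
    (haS : ∀ n, S n < t → 1 ≤ a n) : thresholdCount S t ≤ ∑' n, a n := by
  rw [thresholdCount, Finset.cast_card]
  calc ∑ n ∈ Finset.range ⌊t⌋₊ with S n < t, (1 : ℝ)
      ≤ ∑ n ∈ Finset.range ⌊t⌋₊ with S n < t, a n :=
        Finset.sum_le_sum fun n hn => haS n (Finset.mem_filter.1 hn).2
    _ ≤ ∑' n, a n := ha.sum_le_tsum _ fun n _ => ha₀ n

theorem le_geometric_of_le_of_tail_le {a : ℕ → ℝ} {C t : ℝ} (hC : 0 ≤ C) (ha : ∀ n, a n ≤ C)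
    (htail : ∀ n : ℕ, t ≤ n → a n ≤ C * (1 / 2) ^ n) (n : ℕ) :
    a n ≤ C * 2 ^ ⌈t⌉₊ * (1 / 2) ^ n := by
  obtain hn | hn := le_or_gt t n
  · calc a n ≤ C * 1 * (1 / 2) ^ n := by simpa using htail n hn
      _ ≤ C * 2 ^ ⌈t⌉₊ * (1 / 2) ^ n := by
        gcongr
        exact one_le_pow₀ one_le_two
  · calc a n ≤ C * 2 ^ n * (1 / 2) ^ n := by simpa [mul_assoc, ← mul_pow] using ha n
      _ ≤ C * 2 ^ ⌈t⌉₊ * (1 / 2) ^ n := by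
        have : n ≤ ⌈t⌉₊ := (Nat.lt_ceil.2 hn).le
        gcongr
        exact one_le_two

theorem exists_coarseEmbedding_lp {E : ℕ → Type*} [∀ n, NormedAddCommGroup (E n)]
    {φ : ∀ n, X → E n} {S : ℕ → ℝ} {C : ℝ} (hC : 0 ≤ C)
    (hbdd : ∀ n x y, dist (φ n x) (φ n y) ^ 2 ≤ C)
    (hnear : ∀ (n : ℕ) x y, dist x y ≤ n → dist (φ n x) (φ n y) ^ 2 ≤ C * (1 / 2) ^ n)
    (hfar : ∀ n x y, S n < dist x y → 1 ≤ dist (φ n x) (φ n y) ^ 2) :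
    ∃ F : X → lp E 2, CoarseEmbedding F := by
  have hle (x y : X) (n : ℕ) :
      dist (φ n x) (φ n y) ^ 2 ≤ C * 2 ^ ⌈dist x y⌉₊ * (1 / 2) ^ n :=
    le_geometric_of_le_of_tail_le hC (hbdd · x y) (hnear · x y) n
  have hbound (t : ℝ) :
      HasSum (fun n : ℕ => C * 2 ^ ⌈t⌉₊ * (1 / 2) ^ n) (C * 2 ^ ⌈t⌉₊ * 2) :=
    hasSum_geometric_two.mul_left _
  have hsummable (x y : X) : Summable fun n => dist (φ n x) (φ n y) ^ 2 :=
    .of_nonneg_of_le (fun _ => sq_nonneg _) (hle x y) (hbound _).summable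
  obtain ⟨F, hF⟩ := exists_lp_hasSum_dist_sq φ hsummable
  refine ⟨F, fun t => √(thresholdCount S t), fun t => √(C * 2 ^ ⌈t⌉₊ * 2), ?_, ?_, ?_, ?_⟩
  · exact fun s t hst => Real.sqrt_le_sqrt (by exact_mod_cast thresholdCount_mono S hst)
  · intro s t hst
    dsimp only
    gcongr
    exact one_le_two
  · exact Real.tendsto_sqrt_atTop.comp
      (tendsto_natCast_atTop_atTop.comp (tendsto_thresholdCount_atTop S))
  · refine fun x y => ⟨Real.sqrt_le_iff.2 ⟨dist_nonneg, ?_⟩, Real.le_sqrt_of_sq_le ?_⟩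
    · rw [← (hF x y).tsum_eq]
      exact thresholdCount_le_tsum (hsummable x y) (fun _ => sq_nonneg _) (hfar · x y)
    · exact hasSum_le (hle x y) (hF x y) (hbound _)

end CoarseEmbedding

section Kernels

theorem abs_apply_le_one_of_posSemidef {α : Type*} {k : Matrix α α ℝ} (hk : k.PosSemidef)
    (hk₁ : ∀ x, k x x = 1) (x y : α) : |k x y| ≤ 1 := by
  obtain ⟨H, _, _, _, φ, hφ⟩ := exists_inner_eq_of_posSemidef hk
  have hnorm (z : α) : ‖φ z‖ = 1 := by
    rw [norm_eq_sqrt_real_inner, hφ, hk₁, Real.sqrt_one]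
  simpa [hφ, hnorm] using abs_real_inner_le_norm (φ x) (φ y)

theorem dist_sq_eq_of_inner_eq {α H : Type*} [NormedAddCommGroup H] [InnerProductSpace ℝ H]
    {k : Matrix α α ℝ} {φ : α → H} (hφ : ∀ x y, inner ℝ (φ x) (φ y) = k x y)
    (hk₁ : ∀ x, k x x = 1) (x y : α) : dist (φ x) (φ y) ^ 2 = 2 - 2 * k x y := by
  rw [dist_eq_norm, norm_sub_sq_real, ← real_inner_self_eq_norm_sq, ← real_inner_self_eq_norm_sq,
    hφ, hφ, hφ, hk₁, hk₁]
  ring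

theorem isClosed_setOf_posSemidef {n : Type*} : IsClosed {M : Matrix n n ℝ | M.PosSemidef} := by
  simp only [Matrix.PosSemidef, Finsupp.sum, Set.ofPred_and, Set.ofPred_forall]
  refine .inter (isClosed_eq continuous_id.matrix_conjTranspose continuous_id)
    (isClosed_iInter fun v => isClosed_le continuous_const ?_)
  fun_prop

open scoped Classical in
/-- The kernel of a partition: `1` on pairs of equivalent points and `0` elsewhere. -/
noncomputable def setoidKernel {α : Type*} (r : Setoid α) : Matrix α α ℝ :=
  (1 : Matrix (Quotient r) (Quotient r) ℝ).submatrix (Quotient.mk r) (Quotient.mk r)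

open scoped Classical in
theorem setoidKernel_apply {α : Type*} (r : Setoid α) (x y : α) :
    setoidKernel r x y = if r x y then 1 else 0 := by
  simp [setoidKernel, Matrix.one_apply, Quotient.eq]

variable {X : Type*} [MetricSpace X]

variable (X) in
/-- The positive semidefinite real kernels on `X` that equal `1` on the diagonal and vanish on
pairs of points at distance more than `S`. -/
def normalizedKernels (S : ℝ) : Set (Matrix X X ℝ) :=
  {k | k.PosSemidef ∧ (∀ x, k x x = 1) ∧ ∀ x y, S < dist x y → k x y = 0}

theorem convex_normalizedKernels (S : ℝ) : Convex ℝ (normalizedKernels X S) := by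
  rintro k ⟨hk, hk₁, hkS⟩ l ⟨hl, hl₁, hlS⟩ a b ha hb hab
  refine ⟨(hk.smul ha).add (hl.smul hb), fun x => ?_, fun x y hxy => ?_⟩
  · simp [hk₁, hl₁, hab]
  · simp [hkS x y hxy, hlS x y hxy]

theorem isCompact_normalizedKernels (S : ℝ) : IsCompact (normalizedKernels X S) := by
  have hentry (x y : X) : Continuous fun k : Matrix X X ℝ => k x y :=
    continuous_id.matrix_elem x y
  have hclosed : IsClosed (normalizedKernels X S) := by
    simp only [normalizedKernels, Set.ofPred_and, Set.ofPred_forall]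
    exact isClosed_setOf_posSemidef.inter <|
      (isClosed_iInter fun x => isClosed_eq (hentry x x) continuous_const).inter <|
      isClosed_iInter fun x => isClosed_iInter fun y => isClosed_iInter fun _ =>
        isClosed_eq (hentry x y) continuous_const
  exact (isCompact_Icc (a := (-1 : ℝ)) (b := 1)).matrix.of_isClosed_subset hclosed
    fun k hk x y => abs_le.1 (abs_apply_le_one_of_posSemidef hk.1 hk.2.1 x y)

theorem setoidKernel_mem_normalizedKernels {r : Setoid X} {S : ℝ}
    (hr : ∀ x y, r x y → dist x y ≤ S) : setoidKernel r ∈ normalizedKernels X S := by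
  classical
  refine ⟨Matrix.PosSemidef.one.submatrix _, fun x => ?_, fun x y hxy => ?_⟩
  · simp [setoidKernel_apply]
  · simpa [setoidKernel_apply] using fun h => hxy.not_ge (hr x y h)

theorem exists_coarseEmbedding_lp_nat_of_normalizedKernels [SeparableSpace X]
    (h : ∀ R > 0, ∀ δ > 0, ∃ S, ∃ k ∈ normalizedKernels X S,
      ∀ x y, dist x y ≤ R → 1 - δ ≤ k x y) :
    ∃ f : X → lp (fun _ : ℕ => ℝ) 2, CoarseEmbedding f := by
  choose S k hk hkR using fun n : ℕ => h (n + 1) (by positivity) (2 * (1 / 2) ^ n) (by positivity)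
  choose H _ _ _ φ hφ using fun n => exists_inner_eq_of_posSemidef (hk n).1
  have hdist (n : ℕ) (x y : X) : dist (φ n x) (φ n y) ^ 2 = 2 - 2 * k n x y :=
    dist_sq_eq_of_inner_eq (hφ n) (hk n).2.1 x y
  suffices hF : ∃ F : X → lp H 2, CoarseEmbedding F from hF.elim fun F hF => hF.exists_lp_nat
  refine exists_coarseEmbedding_lp (φ := φ) (S := S) (C := 4) (by norm_num)
    (fun n x y => ?_) (fun n x y hxy => ?_) (fun n x y hxy => ?_)
  · linarith [hdist n x y, (abs_le.1 (abs_apply_le_one_of_posSemidef (hk n).1 (hk n).2.1 x y)).1]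
  · linarith [hdist n x y, hkR n x y (by linarith)]
  · linarith [hdist n x y, (hk n).2.2 x y hxy]

end Kernels

section Minimax

variable {E : Type*} [AddCommGroup E] [Module ℝ E] [TopologicalSpace E] [IsTopologicalAddGroup E]
  [ContinuousSMul ℝ E] {K : Set E} {ι : Type*} {φ : ι → E →L[ℝ] ℝ} {c : ℝ}

theorem exists_forall_le_of_forall_stdSimplex [Fintype ι] (hKne : K.Nonempty)
    (hKcvx : Convex ℝ K) (hK : IsCompact K)
    (h : ∀ w ∈ stdSimplex ℝ ι, ∃ k ∈ K, c ≤ ∑ i, w i * φ i k) : ∃ k ∈ K, ∀ i, c ≤ φ i k := by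
  classical
  obtain _ | _ := isEmpty_or_nonempty ι
  · exact hKne.imp fun k hk => ⟨hk, isEmptyElim⟩
  let f (w : ι → ℝ) (k : E) : ℝ := ∑ i, w i * φ i k
  have hconvex (k : E) : ConvexOn ℝ (stdSimplex ℝ ι) (f · k) := by
    refine ⟨convex_stdSimplex ℝ ι, fun w _ v _ a b _ _ _ => le_of_eq ?_⟩
    simp [f, add_mul, mul_assoc, Finset.sum_add_distrib, Finset.mul_sum]
  have hconcave (w : ι → ℝ) : ConcaveOn ℝ K (f w) := by
    refine ⟨hKcvx, fun k _ l _ a b _ _ _ => le_of_eq ?_⟩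
    simp [f, mul_add, mul_left_comm, Finset.sum_add_distrib, Finset.mul_sum]
  obtain ⟨w, hw, k, hk, hsaddle⟩ := Sion.exists_isSaddlePointOn (X := stdSimplex ℝ ι) (Y := K)
    (f := f) ⟨_, single_mem_stdSimplex ℝ (Classical.arbitrary ι)⟩ (convex_stdSimplex ℝ ι)
    (isCompact_stdSimplex ℝ ι)
    (fun k _ => (by fun_prop : Continuous (f · k)).lowerSemicontinuous.lowerSemicontinuousOn _)
    (fun k _ => (hconvex k).quasiconvexOn) hKcvx hKne hK
    (fun w _ => (by fun_prop : Continuous (f w)).upperSemicontinuous.upperSemicontinuousOn _)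
    (fun w _ => (hconcave w).quasiconcaveOn)
  obtain ⟨l, hl, hcl⟩ := h w hw
  refine ⟨k, hk, fun i => ?_⟩
  calc c ≤ f w l := hcl
    _ ≤ f (Pi.single i 1) k := hsaddle _ (single_mem_stdSimplex ℝ i) _ hl
    _ = φ i k := by simp [f, Pi.single_apply]

theorem exists_forall_le_of_forall_finset_stdSimplex (hKne : K.Nonempty)
    (hKcvx : Convex ℝ K) (hK : IsCompact K)
    (h : ∀ s : Finset ι, ∀ w ∈ stdSimplex ℝ s, ∃ k ∈ K, c ≤ ∑ i, w i * φ i k) :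
    ∃ k ∈ K, ∀ i, c ≤ φ i k := by
  have hclosed (i : ι) : IsClosed {k | c ≤ φ i k} := isClosed_le continuous_const (φ i).continuous
  have hfinite (s : Finset ι) : (K ∩ ⋂ i ∈ s, {k | c ≤ φ i k}).Nonempty := by
    obtain ⟨k, hk, hc⟩ := exists_forall_le_of_forall_stdSimplex
      (φ := fun i : s => φ i) hKne hKcvx hK (h s)
    exact ⟨k, hk, Set.mem_iInter₂.2 fun i hi => hc ⟨i, hi⟩⟩
  obtain ⟨k, hk, hc⟩ := hK.inter_iInter_nonempty _ hclosed hfinite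
  exact ⟨k, hk, Set.mem_iInter.1 hc⟩

end Minimax

section LocalAmenability

variable {X : Type*} [MetricSpace X] {R ε S : ℝ}

variable (X R ε S) in
/-- Measured uniform local amenability with parameters: every probability measure `μ` on `X` has
`μ(∂_R E) < ε μ(E)` for some `E ⊆ X` of diameter at most `S`. -/
def ULAmuAt : Prop :=
  ∀ μ : X → ℝ, IsProbFn μ →
    ∃ E : Set X, Metric.ediam E ≤ ENNReal.ofReal S ∧ measOf μ (bdry R E) < ε * measOf μ E

open scoped Classical in
theorem measOf_eq_sum_filter {α : Type*} {μ : α → ℝ} {F : Finset α} (hμ : ∀ x ∉ F, μ x = 0)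
    (E : Set α) : measOf μ E = ∑ x ∈ F with x ∈ E, μ x := by
  rw [measOf, tsum_subtype, tsum_eq_sum (s := F) fun x hx => by simp [hμ x hx], Finset.sum_filter]
  simp only [Set.indicator_apply]

theorem isProbFn_of_sum_eq_one {α : Type*} {μ : α → ℝ} {F : Finset α} (hμ : ∀ x, 0 ≤ μ x)
    (hF : ∀ x ∉ F, μ x = 0) (hsum : ∑ x ∈ F, μ x = 1) : IsProbFn μ :=
  ⟨hμ, summable_of_ne_finset_zero hF, by rw [tsum_eq_sum hF, hsum]⟩

theorem dist_le_of_ediam_le {α : Type*} [PseudoMetricSpace α] {E : Set α} {r : ℝ} (hr : 0 ≤ r)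
    (hE : Metric.ediam E ≤ ENNReal.ofReal r) {x y : α} (hx : x ∈ E) (hy : y ∈ E) :
    dist x y ≤ r := by
  rw [← edist_le_ofReal hr]
  exact (Metric.edist_le_ediam_of_mem hx hy).trans hE

open scoped Classical in
theorem ULAmuAt.exists_sum_bdry_lt (h : ULAmuAt X R ε S) {w : X → ℝ} (hw : ∀ x, 0 ≤ w x)
    {F : Finset X} (hF : 0 < ∑ x ∈ F, w x) :
    ∃ E : Set X, Metric.ediam E ≤ ENNReal.ofReal S ∧
      ∑ x ∈ F with x ∈ bdry R E, w x < ε * ∑ x ∈ F with x ∈ E, w x := by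
  let W : ℝ := ∑ x ∈ F, w x
  let μ (x : X) : ℝ := if x ∈ F then w x / W else 0
  have hμF : ∀ x ∉ F, μ x = 0 := fun x hx => if_neg hx
  have hμ : IsProbFn μ := by
    refine isProbFn_of_sum_eq_one (F := F) (fun x => ?_) hμF ?_
    · dsimp only [μ]
      split_ifs
      exacts [div_nonneg (hw x) hF.le, le_rfl]
    · rw [Finset.sum_congr rfl fun x hx => if_pos hx, ← Finset.sum_div, div_self hF.ne']
  have hmeas (E : Set X) : measOf μ E = (∑ x ∈ F with x ∈ E, w x) / W := by
    rw [measOf_eq_sum_filter hμF, Finset.sum_div]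
    exact Finset.sum_congr rfl fun x hx => if_pos (Finset.mem_filter.1 hx).1
  obtain ⟨E, hES, hE⟩ := h μ hμ
  refine ⟨E, hES, ?_⟩
  rwa [hmeas, hmeas, ← mul_div_assoc, div_lt_div_iff_of_pos_right hF] at hE

/-- The partition whose classes are `E` and the traces on `Eᶜ` of the classes of `r`. -/
def adjoinClass {α : Type*} (E : Set α) (r : Setoid α) : Setoid α where
  r x y := x ∈ E ∧ y ∈ E ∨ x ∉ E ∧ y ∉ E ∧ r x y
  iseqv :=
    { refl := fun x => by simpa using em (x ∈ E)
      symm := fun h => h.imp And.symm fun ⟨hx, hy, hxy⟩ => ⟨hy, hx, r.symm hxy⟩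
      trans := by
        rintro x y z (⟨hx, hy⟩ | ⟨hx, hy, hxy⟩) (⟨hy', hz⟩ | ⟨hy', hz, hyz⟩)
        · exact .inl ⟨hx, hz⟩
        · exact absurd hy hy'
        · exact absurd hy' hy
        · exact .inr ⟨hx, hz, r.trans hxy hyz⟩ }

theorem adjoinClass_apply_of_notMem_bdry {E : Set X} {r : Setoid X} {x y : X}
    (hxE : x ∉ bdry R E) (hyE : y ∉ bdry R E) (hxy : dist x y ≤ R)
    (hr : x ∉ E → y ∉ E → r x y) : adjoinClass E r x y := by
  by_cases hx : x ∈ E <;> by_cases hy : y ∈ E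
  · exact .inl ⟨hx, hy⟩
  · exact absurd ⟨⟨x, hx, dist_comm x y ▸ hxy⟩, hy⟩ hyE
  · exact absurd ⟨⟨y, hy, hxy⟩, hx⟩ hxE
  · exact .inr ⟨hx, hy, hr hx hy⟩

theorem ULAmuAt.exists_setoid (h : ULAmuAt X R ε S) (hε : 0 ≤ ε) (hS : 0 ≤ S) {w : X → ℝ}
    (hw : ∀ x, 0 ≤ w x) (F : Finset X) :
    ∃ (Z : Finset X) (r : Setoid X), ∑ x ∈ Z, w x ≤ ε * ∑ x ∈ F, w x ∧
      (∀ x y, r x y → dist x y ≤ S) ∧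
      ∀ x ∈ F, ∀ y ∈ F, x ∉ Z → y ∉ Z → dist x y ≤ R → r x y := by
  classical
  induction F using Finset.strongInduction with
  | H F ih =>
  obtain hzero | hpos := (Finset.sum_nonneg fun x (_ : x ∈ F) => hw x).eq_or_lt
  · exact ⟨F, ⊥, by simp [← hzero], by simp [hS], fun x hx _ _ hx' => absurd hx hx'⟩
  obtain ⟨E, hES, hE⟩ := h.exists_sum_bdry_lt hw hpos
  obtain ⟨e, heF⟩ : ({x ∈ F | x ∈ E} : Finset X).Nonempty := by
    by_contra! hempty
    rw [hempty, Finset.sum_empty, mul_zero] at hE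
    exact hE.not_ge (Finset.sum_nonneg fun x _ => hw x)
  let F' : Finset X := {x ∈ F | x ∉ E ∧ x ∉ bdry R E}
  have hF' : F' ⊂ F := Finset.filter_ssubset.2 ⟨e, by grind, by grind⟩
  obtain ⟨Z, r, hZ, hrS, hr⟩ := ih F' hF'
  refine ⟨Z ∪ {x ∈ F | x ∈ bdry R E}, adjoinClass E r, ?_, ?_, ?_⟩
  · have hsplit : ∑ x ∈ F', w x + ∑ x ∈ F with x ∈ E, w x ≤ ∑ x ∈ F, w x := by
      rw [← Finset.sum_union (Finset.disjoint_left.2 (by grind))]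
      exact Finset.sum_le_sum_of_subset_of_nonneg (by grind) fun x _ _ => hw x
    calc ∑ x ∈ Z ∪ {x ∈ F | x ∈ bdry R E}, w x
        ≤ ∑ x ∈ Z, w x + ∑ x ∈ F with x ∈ bdry R E, w x := by
          rw [← Finset.sum_union_inter]
          exact le_add_of_nonneg_right (Finset.sum_nonneg fun x _ => hw x)
      _ ≤ ε * ∑ x ∈ F', w x + ε * ∑ x ∈ F with x ∈ E, w x := add_le_add hZ hE.le
      _ ≤ ε * ∑ x ∈ F, w x := by rw [← mul_add]; gcongr
  · rintro x y (⟨hx, hy⟩ | ⟨-, -, hxy⟩)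
    · exact dist_le_of_ediam_le hS hES hx hy
    · exact hrS x y hxy
  · intro x hx y hy hxZ hyZ hxy
    simp only [Finset.mem_union, Finset.mem_filter, not_or, not_and] at hxZ hyZ
    refine adjoinClass_apply_of_notMem_bdry (hxZ.2 hx) (hyZ.2 hy) hxy fun hxE hyE => ?_
    exact hr x (by grind) y (by grind) hxZ.1 hyZ.1 hxy

theorem ULAmuAt.exists_sum_le_sum_mul (h : ULAmuAt X R ε S) (hε : 0 ≤ ε) (hS : 0 ≤ S)
    {ι : Type*} [Fintype ι] {a b : ι → X} (hab : ∀ i, dist (a i) (b i) ≤ R) {w : ι → ℝ}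
    (hw : ∀ i, 0 ≤ w i) :
    ∃ k ∈ normalizedKernels X S, (1 - 2 * ε) * ∑ i, w i ≤ ∑ i, w i * k (a i) (b i) := by
  classical
  -- Each pair charges its weight to both endpoints: `r` separates a pair only if one of them is
  -- in `Z`.
  let W (x : X) : ℝ := ∑ i, w i * ((if a i = x then 1 else 0) + if b i = x then 1 else 0)
  have hW (x : X) : 0 ≤ W x := Finset.sum_nonneg fun i _ => mul_nonneg (hw i) (by positivity)
  have hsum (Z : Finset X) :
      ∑ x ∈ Z, W x = ∑ i, w i * ((if a i ∈ Z then 1 else 0) + if b i ∈ Z then 1 else 0) := by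
    rw [Finset.sum_comm]
    simp only [← Finset.mul_sum, Finset.sum_add_distrib, Finset.sum_ite_eq]
  let F : Finset X := Finset.univ.image a ∪ Finset.univ.image b
  have ha (i : ι) : a i ∈ F := by simp [F]
  have hb (i : ι) : b i ∈ F := by simp [F]
  obtain ⟨Z, r, hZ, hrS, hr⟩ := h.exists_setoid hε hS hW F
  have hker (i : ι) : 1 - ((if a i ∈ Z then 1 else 0) + if b i ∈ Z then 1 else 0) ≤
      setoidKernel r (a i) (b i) := by
    have := hr (a i) (ha i) (b i) (hb i)
    rw [setoidKernel_apply]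
    grind
  refine ⟨setoidKernel r, setoidKernel_mem_normalizedKernels hrS, ?_⟩
  have hF : ∑ x ∈ F, W x = 2 * ∑ i, w i := by
    simp only [hsum, ha, hb, if_true, ← Finset.sum_mul]
    ring
  calc (1 - 2 * ε) * ∑ i, w i = ∑ i, w i - ε * ∑ x ∈ F, W x := by rw [hF]; ring
    _ ≤ ∑ i, w i - ∑ x ∈ Z, W x := by gcongr
    _ = ∑ i, w i * (1 - ((if a i ∈ Z then 1 else 0) + if b i ∈ Z then 1 else 0)) := by
      simp only [hsum, mul_sub, mul_one, Finset.sum_sub_distrib]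
    _ ≤ ∑ i, w i * setoidKernel r (a i) (b i) := by
      gcongr with i
      exacts [hw i, hker i]

theorem ULAmuAt.exists_mem_normalizedKernels (h : ULAmuAt X R ε S) (hε : 0 ≤ ε) (hS : 0 ≤ S) :
    ∃ k ∈ normalizedKernels X S, ∀ x y, dist x y ≤ R → 1 - 2 * ε ≤ k x y := by
  let φ (p : {p : X × X // dist p.1 p.2 ≤ R}) : Matrix X X ℝ →L[ℝ] ℝ :=
    ⟨Matrix.entryLinearMap ℝ ℝ p.1.1 p.1.2, continuous_id.matrix_elem _ _⟩
  have hne : (normalizedKernels X S).Nonempty :=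
    ⟨setoidKernel ⊥, setoidKernel_mem_normalizedKernels (by simp [hS])⟩
  obtain ⟨k, hk, hkR⟩ := exists_forall_le_of_forall_finset_stdSimplex (φ := φ) (c := 1 - 2 * ε)
    hne (convex_normalizedKernels S) (isCompact_normalizedKernels S) fun s w ⟨hw, hw₁⟩ => by
      have hsum := h.exists_sum_le_sum_mul hε hS (fun p : s => p.1.2) hw
      rwa [hw₁, mul_one] at hsum
  exact ⟨k, hk, fun x y hxy => hkR ⟨(x, y), hxy⟩⟩

end LocalAmenability

theorem BoundedGeometry.properSpace {X : Type*} [MetricSpace X] (h : BoundedGeometry X) :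
    ProperSpace X := by
  refine .of_isCompact_closedBall_of_le 1 fun x r hr => ?_
  obtain ⟨_, hN⟩ := h r (one_pos.trans_le hr)
  have hball : Metric.closedBall x r = {y | dist x y ≤ r} :=
    Set.ext fun y => by simp [dist_comm]
  exact hball ▸ (hN x).1.isCompact

theorem not_coarse_embeddable_implies_not_ulamu_general {X : Type*} [MetricSpace X]
    [SeparableSpace X] (hce : ¬ ∃ f : X → lp (fun _ : ℕ => ℝ) 2, CoarseEmbedding f) :
    ∃ ε : ℝ, 0 < ε ∧ ∃ R : ℝ, 0 < R ∧ ∀ S : ℝ, 0 < S →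
      ∃ μ : X → ℝ, IsProbFn μ ∧
        ∀ E : Set X, Metric.ediam E ≤ ENNReal.ofReal S →
          ε * measOf μ E ≤ measOf μ (bdry R E) := by
  by_contra! hcon
  refine hce (exists_coarseEmbedding_lp_nat_of_normalizedKernels fun R hR δ hδ => ?_)
  obtain ⟨S, hS, hamen⟩ : ∃ S, 0 < S ∧ ULAmuAt X R (δ / 2) S := hcon (δ / 2) (half_pos hδ) R hR
  refine ⟨S, ?_⟩
  simpa only [mul_div_cancel₀ δ two_ne_zero] using
    hamen.exists_mem_normalizedKernels (half_pos hδ).le hS.le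

/-- Theorem 3.4 (after Ostrovskii): if a bounded geometry metric space does not coarsely
embed into the real Hilbert space $\ell^2(\mathbb N)$, then there are $\epsilon, R > 0$ such
that for every $S > 0$ there is a probability measure $\mu$ on $X$ such that every
$E \subseteq \mathrm{supp}(\mu)$ of diameter at most $S$ satisfies
$\mu(\partial_R E) \geq \epsilon \mu(E)$. -/
theorem not_coarse_embeddable_implies_not_ulamu {X : Type*} [MetricSpace X]
    (hbg : BoundedGeometry X)
    (hce : ¬ ∃ f : X → lp (fun _ : ℕ => ℝ) 2, CoarseEmbedding f) :
    ∃ ε : ℝ, 0 < ε ∧ ∃ R : ℝ, 0 < R ∧ ∀ S : ℝ, 0 < S →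
      ∃ μ : X → ℝ, IsProbFn μ ∧
        ∀ E : Set X, E ⊆ Function.support μ → EMetric.diam E ≤ ENNReal.ofReal S →
          ε * measOf μ E ≤ measOf μ (bdry R E) := by
  have := hbg.properSpace
  obtain ⟨ε, hε, R, hR, h⟩ := not_coarse_embeddable_implies_not_ulamu_general hce
  exact ⟨ε, hε, R, hR, fun S hS => (h S hS).imp fun _ hμ => ⟨hμ.1, fun E _ => hμ.2 E⟩⟩
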